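/- Let q ≥ 2, let Γ be a strongly regular graph with parameters (q³+q²+q+1, q²+q, q−1, q+1), and let v be a regular point of Γ (with s = t = q). Define a graph Γ' on the set of vertices distinct from v and not adjacent to v (a set of q³ vertices) by letting distinct x, y be adjacent in Γ' iff either x and y are adjacent in Γ or N(v) ∩ N(x) = N(v) ∩ N(y). Then Γ' is a strongly regular graph with parameters (q³, (q−1)(q+2), q−2, q+2), i.e., with the parameters of the collinearity graph of a generalized quadrangle of order (q−1, q+1). -/

import Mathlib

open scoped Classical

/-- For a graph `G` and a set `X` of vertices, `X^⊥` is the set of vertices `w` such that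
for every `x ∈ X`, either `w = x` or `w` is adjacent to `x`. -/
def perp {V : Type*} (G : SimpleGraph V) (X : Set V) : Set V :=
  {w | ∀ x ∈ X, w = x ∨ G.Adj w x}

/-- A vertex `v` of a strongly regular graph with parameters
`((s+1)(st+1), s(t+1), s−1, t+1)` is a regular point if (i) the subgraph induced on `N(v)`
is a disjoint union of cliques, and (ii) for every vertex `x ≠ v` not adjacent to `v`, the
span `{v,x}^{⊥⊥}` has exactly `t + 1` elements and is a coclique. -/
def IsRegularPoint {V : Type*} (G : SimpleGraph V) (t : ℕ) (v : V) : Prop :=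
  Equivalence (fun x y : G.neighborSet v => x = y ∨ G.Adj ↑x ↑y) ∧
  ∀ x : V, x ≠ v → ¬ G.Adj v x →
    (perp G (perp G {v, x})).ncard = t + 1 ∧
    ∀ y ∈ perp G (perp G {v, x}), ∀ z ∈ perp G (perp G {v, x}), ¬ G.Adj y z


/-! The spans of `v` with its non-neighbours meet the second subconstituent in the classes of the
relation `N(v) ∩ N(x) = N(v) ∩ N(y)`. A span `S` and the set `T` of common neighbours of `v` and
`x` are cocliques of size `q + 1` completely joined to each other, and a variance count shows that
every vertex outside `S ∪ T` has exactly one neighbour in `S` and exactly one in `T`. The first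
fact makes the second subconstituent a cover of a complete graph with the classes as fibres; the
second one says that two vertices in distinct fibres lose exactly one common neighbour on passing
to it. Turning each fibre into a clique then creates two new common neighbours for non-adjacent
vertices in distinct fibres and none for adjacent ones. -/

section StronglyRegular

open Finset

variable {V : Type*} [Fintype V] {G : SimpleGraph V} {n k ℓ μ q : ℕ}

lemma isSRGWith_iff_ncard [DecidableRel G.Adj] :
    G.IsSRGWith n k ℓ μ ↔ Nat.card V = n ∧ (∀ x, (G.neighborSet x).ncard = k) ∧
      (∀ x y, G.Adj x y → (G.commonNeighbors x y).ncard = ℓ) ∧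
      ∀ x y, x ≠ y → ¬ G.Adj x y → (G.commonNeighbors x y).ncard = μ := by
  simp only [← Nat.card_coe_set_eq, Nat.card_eq_fintype_card, G.card_neighborSet_eq_degree]
  exact ⟨fun h => ⟨h.card, h.regular, h.of_adj, fun _ _ hne => h.of_not_adj hne⟩,
    fun ⟨hn, hk, hℓ, hμ⟩ => ⟨hn, hk, hℓ, fun x y hne => hμ x y hne⟩⟩

lemma sum_card_filter_adj (hG : G.IsRegularOfDegree k) (S : Finset V) :
    ∑ y, #{s ∈ S | G.Adj y s} = #S * k := by
  calc ∑ y, #{s ∈ S | G.Adj y s} = ∑ s ∈ S, #{y | G.Adj y s} :=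
        sum_card_bipartiteAbove_eq_sum_card_bipartiteBelow _
    _ = #S * k := by
        refine sum_const_nat fun s _ => ?_
        rw [← hG s, ← G.card_neighborFinset_eq_degree]
        congr 1
        ext y
        simp [G.adj_comm y]

lemma sum_card_filter_adj_sq (G : SimpleGraph V) (S : Finset V) :
    ∑ y, #{s ∈ S | G.Adj y s} ^ 2 = ∑ s ∈ S, ∑ s' ∈ S, (G.commonNeighbors s s').ncard := by
  calc ∑ y, #{s ∈ S | G.Adj y s} ^ 2
      = ∑ y, #{p ∈ S ×ˢ S | G.Adj y p.1 ∧ G.Adj y p.2} := by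
        simp only [sq, ← card_product, filter_product]
    _ = ∑ p ∈ S ×ˢ S, #{y | G.Adj y p.1 ∧ G.Adj y p.2} :=
        sum_card_bipartiteAbove_eq_sum_card_bipartiteBelow _
    _ = ∑ s ∈ S, ∑ s' ∈ S, (G.commonNeighbors s s').ncard := by
        rw [sum_product]
        refine sum_congr rfl fun s _ => sum_congr rfl fun s' _ => ?_
        rw [← Set.ncard_coe_finset]
        congr 1
        ext y
        simp [SimpleGraph.mem_commonNeighbors, G.adj_comm y]

lemma sum_card_filter_adj_sq_of_isIndepSet (hG : G.IsSRGWith n k ℓ μ) {S : Finset V}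
    (hS : G.IsIndepSet (S : Set V)) :
    ∑ y, #{s ∈ S | G.Adj y s} ^ 2 = #S * (k + (#S - 1) * μ) := by
  obtain ⟨-, hk, -, hμ⟩ := isSRGWith_iff_ncard.1 hG
  rw [sum_card_filter_adj_sq]
  refine sum_const_nat fun s hs => ?_
  have hoff : ∀ s' ∈ S.erase s, (G.commonNeighbors s s').ncard = μ := fun s' hs' =>
    hμ s s' (ne_of_mem_erase hs').symm
      (hS hs (mem_of_mem_erase hs') (ne_of_mem_erase hs').symm)
  rw [← add_sum_erase _ _ hs, sum_const_nat hoff, card_erase_of_mem hs, G.commonNeighbors_eq,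
    Set.inter_self, hk]

lemma sum_card_filter_adj_sub_one_sq (hG : G.IsSRGWith n k ℓ μ) {S : Finset V}
    (hS : G.IsIndepSet (S : Set V)) :
    ∑ y, (#{s ∈ S | G.Adj y s} - 1 : ℤ) ^ 2 =
      #S * (k + ((#S - 1 : ℕ) : ℤ) * μ) - 2 * (#S * k) + n := by
  have hfirst : ∑ y, (#{s ∈ S | G.Adj y s} : ℤ) = #S * k := by
    exact_mod_cast sum_card_filter_adj hG.regular S
  have hsecond : ∑ y, (#{s ∈ S | G.Adj y s} : ℤ) ^ 2 =
      #S * (k + ((#S - 1 : ℕ) : ℤ) * μ) := by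
    exact_mod_cast sum_card_filter_adj_sq_of_isIndepSet hG hS
  simp only [sub_sq, sum_add_distrib, sum_sub_distrib, mul_one, one_pow, ← mul_sum, hfirst,
    hsecond, sum_const, card_univ, hG.card, nsmul_one]

/- The numbers `#{s ∈ S | G.Adj y s} - 1` have the same sum of squares over all vertices as over
`S ∪ T`, so they vanish outside `S ∪ T`. -/
lemma card_filter_adj_eq_one_of_isCompleteBetween
    (hG : G.IsSRGWith (q ^ 3 + q ^ 2 + q + 1) (q ^ 2 + q) ℓ (q + 1)) {S T : Finset V}
    (hScard : #S = q + 1) (hTcard : #T = q + 1) (hS : G.IsIndepSet (S : Set V))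
    (hST : G.IsCompleteBetween (S : Set V) T) {y : V} (hyS : y ∉ S) (hyT : y ∉ T) :
    #{s ∈ S | G.Adj y s} = 1 := by
  let dev : V → ℤ := fun y => (#{s ∈ S | G.Adj y s} - 1) ^ 2
  have htotal : ∑ y, dev y = (q + 1) * (q ^ 2 + 1) := by
    rw [sum_card_filter_adj_sub_one_sq hG hS, hScard]
    push_cast [Nat.add_sub_cancel]
    ring
  have hdevS : ∀ y ∈ S, dev y = 1 := fun y hy => by
    have hnone : #{s ∈ S | G.Adj y s} = 0 := card_eq_zero.2 <| filter_false_of_mem fun s hs h =>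
      hS hy hs h.ne h
    simp [dev, hnone]
  have hdevT : ∀ y ∈ T, dev y = q ^ 2 := fun y hy => by
    have hall : #{s ∈ S | G.Adj y s} = q + 1 := by
      rw [filter_true_of_mem fun s hs => (hST hs hy).symm, hScard]
    simp [dev, hall]
  have hinside : ∑ y ∈ S ∪ T, dev y = (q + 1) * (q ^ 2 + 1) := by
    rw [sum_union (disjoint_coe.1 hST.disjoint), sum_congr rfl hdevS, sum_congr rfl hdevT]
    simp only [sum_const, hScard, hTcard, nsmul_eq_mul]
    push_cast
    ring
  have houtside : ∑ y ∈ (S ∪ T)ᶜ, dev y = 0 := by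
    have := sum_add_sum_compl (S ∪ T) dev
    linarith
  have hdev : dev y = 0 :=
    (sum_eq_zero_iff_of_nonneg fun _ _ => sq_nonneg _).1 houtside y (by simp [hyS, hyT])
  exact_mod_cast sub_eq_zero.1 (sq_eq_zero_iff.1 hdev)

lemma ncard_neighborSet_inter_eq_one_of_isCompleteBetween
    (hG : G.IsSRGWith (q ^ 3 + q ^ 2 + q + 1) (q ^ 2 + q) ℓ (q + 1)) {S T : Set V}
    (hScard : S.ncard = q + 1) (hTcard : T.ncard = q + 1) (hS : G.IsIndepSet S)
    (hST : G.IsCompleteBetween S T) {y : V} (hyS : y ∉ S) (hyT : y ∉ T) :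
    (G.neighborSet y ∩ S).ncard = 1 := by
  lift S to Finset V using S.toFinite
  lift T to Finset V using T.toFinite
  rw [Set.ncard_coe_finset] at hScard hTcard
  rw [← card_filter_adj_eq_one_of_isCompleteBetween hG hScard hTcard hS hST hyS hyT,
    ← Set.ncard_coe_finset]
  congr 1
  ext s
  simp [and_comm]

end StronglyRegular

section CompleteGraphCover

variable {W : Type*} {H : SimpleGraph W} {r : Setoid W} {x y : W}

/-- `H` is a cover of a complete graph whose fibres are the classes of `r`: every fibre is a
coclique, and between two distinct fibres `H` is a perfect matching. -/
structure IsCompleteGraphCover (H : SimpleGraph W) (r : Setoid W) : Prop where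
  not_adj : ∀ ⦃x y⦄, r x y → ¬ H.Adj x y
  existsUnique_adj : ∀ ⦃x y⦄, ¬ r x y → ∃! z, H.Adj x z ∧ r y z

/-- The graph obtained from `H` by turning every class of `r` into a clique. -/
def mergeFibres (H : SimpleGraph W) (r : Setoid W) : SimpleGraph W :=
  SimpleGraph.fromRel fun x y => H.Adj x y ∨ r x y

lemma mergeFibres_adj : (mergeFibres H r).Adj x y ↔ x ≠ y ∧ (H.Adj x y ∨ r x y) := by
  simp only [mergeFibres, SimpleGraph.fromRel_adj, H.adj_comm y x, r.comm' (x := y), or_self]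

lemma neighborSet_mergeFibres (x : W) :
    (mergeFibres H r).neighborSet x = H.neighborSet x ∪ ({y | r x y} \ {x}) := by
  ext y
  have := H.ne_of_adj (a := x) (b := y)
  simp only [SimpleGraph.mem_neighborSet, mergeFibres_adj, Set.mem_union, Set.mem_sdiff,
    Set.mem_ofPred_eq, Set.mem_singleton_iff, eq_comm (a := y)]
  tauto

namespace IsCompleteGraphCover

lemma eq_of_adj_of_rel (hH : IsCompleteGraphCover H r) {a b : W} (ha : H.Adj x a)
    (hb : H.Adj x b) (hab : r a b) : a = b :=
  (hH.existsUnique_adj fun h => hH.not_adj h ha).unique ⟨ha, r.refl a⟩ ⟨hb, hab⟩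

lemma commonNeighbors_mergeFibres_of_adj (hH : IsCompleteGraphCover H r) (hxy : H.Adj x y) :
    (mergeFibres H r).commonNeighbors x y = H.commonNeighbors x y := by
  ext z
  simp only [SimpleGraph.mem_commonNeighbors, mergeFibres_adj]
  constructor
  · rintro ⟨⟨hxz, h | hrx⟩, hyz, h' | hry⟩
    · exact ⟨h, h'⟩
    · exact absurd (hH.eq_of_adj_of_rel hxy h hry) hyz
    · exact absurd (hH.eq_of_adj_of_rel hxy.symm h' hrx) hxz
    · exact absurd hxy (hH.not_adj (r.trans hrx (r.symm hry)))
  · exact fun ⟨h, h'⟩ => ⟨⟨h.ne, .inl h⟩, h'.ne, .inl h'⟩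

lemma commonNeighbors_mergeFibres_of_rel (hH : IsCompleteGraphCover H r) (hne : x ≠ y)
    (hxy : r x y) : (mergeFibres H r).commonNeighbors x y = {z | r x z} \ {x, y} := by
  ext z
  simp only [SimpleGraph.mem_commonNeighbors, mergeFibres_adj, Set.mem_sdiff, Set.mem_ofPred_eq,
    Set.mem_insert_iff, Set.mem_singleton_iff, not_or]
  constructor
  · rintro ⟨⟨hxz, h | hrx⟩, hyz, h' | hry⟩
    · exact absurd (hH.eq_of_adj_of_rel h.symm h'.symm hxy) hne
    · exact absurd h (hH.not_adj (r.trans hxy hry))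
    · exact absurd h' (hH.not_adj (r.trans (r.symm hxy) hrx))
    · exact ⟨hrx, hxz.symm, hyz.symm⟩
  · exact fun ⟨hrx, hzx, hzy⟩ =>
      ⟨⟨Ne.symm hzx, .inr hrx⟩, Ne.symm hzy, .inr (r.trans (r.symm hxy) hrx)⟩

lemma exists_commonNeighbors_mergeFibres_eq_insert (hH : IsCompleteGraphCover H r)
    (hadj : ¬ H.Adj x y) (hr : ¬ r x y) :
    ∃ a b, a ≠ b ∧ a ∉ H.commonNeighbors x y ∧ b ∉ H.commonNeighbors x y ∧
      (mergeFibres H r).commonNeighbors x y = insert a (insert b (H.commonNeighbors x y)) := by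
  obtain ⟨a, ⟨hya, hxa⟩, ha⟩ := hH.existsUnique_adj fun h => hr (r.symm h)
  obtain ⟨b, ⟨hxb, hyb⟩, hb⟩ := hH.existsUnique_adj hr
  refine ⟨a, b, ?_, fun h => hH.not_adj hxa h.1, fun h => hH.not_adj hyb h.2, ?_⟩
  · rintro rfl
    exact hr (r.trans hxa (r.symm hyb))
  ext z
  simp only [SimpleGraph.mem_commonNeighbors, mergeFibres_adj, Set.mem_insert_iff]
  constructor
  · rintro ⟨⟨-, h | hrx⟩, -, h' | hry⟩
    · exact .inr (.inr ⟨h, h'⟩)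
    · exact .inr (.inl (hb z ⟨h, hry⟩))
    · exact .inl (ha z ⟨h', hrx⟩)
    · exact absurd (r.trans hrx (r.symm hry)) hr
  · rintro (rfl | rfl | ⟨h, h'⟩)
    · exact ⟨⟨fun h => hadj (h ▸ hya.symm), .inr hxa⟩, hya.ne, .inl hya⟩
    · exact ⟨⟨hxb.ne, .inl hxb⟩, fun h => hadj (h ▸ hxb), .inr hyb⟩
    · exact ⟨⟨h.ne, .inl h⟩, h'.ne, .inl h'⟩

theorem isSRGWith_mergeFibres {_ : Fintype W} {_ : DecidableRel (mergeFibres H r).Adj}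
    {n k c μ : ℕ}
    (hH : IsCompleteGraphCover H r) (hn : Nat.card W = n)
    (hk : ∀ x, (H.neighborSet x).ncard = k) (hc : ∀ x, {y | r x y}.ncard = c)
    (hℓ : ∀ x y, H.Adj x y → (H.commonNeighbors x y).ncard = c - 2)
    (hμ : ∀ x y, ¬ H.Adj x y → ¬ r x y → (H.commonNeighbors x y).ncard = μ) :
    (mergeFibres H r).IsSRGWith n (k + (c - 1)) (c - 2) (μ + 2) := by
  have hself (x : W) : x ∈ {y | r x y} := r.refl x
  refine isSRGWith_iff_ncard.2 ⟨hn, fun x => ?_, fun x y hxy => ?_, fun x y hne hxy => ?_⟩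
  · have hdisj : Disjoint (H.neighborSet x) ({y | r x y} \ {x}) :=
      Set.disjoint_left.2 fun y hadj hy => hH.not_adj hy.1 hadj
    rw [neighborSet_mergeFibres, Set.ncard_union_eq hdisj, hk,
      Set.ncard_sdiff_singleton_of_mem (hself x), hc]
  · obtain ⟨hne, hadj | hr⟩ := mergeFibres_adj.1 hxy
    · rw [hH.commonNeighbors_mergeFibres_of_adj hadj, hℓ x y hadj]
    · rw [hH.commonNeighbors_mergeFibres_of_rel hne hr,
        Set.ncard_sdiff (Set.pair_subset (hself x) hr), hc, Set.ncard_pair hne]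
  · have hadj : ¬ H.Adj x y := fun h => hxy (mergeFibres_adj.2 ⟨hne, .inl h⟩)
    have hr : ¬ r x y := fun h => hxy (mergeFibres_adj.2 ⟨hne, .inr h⟩)
    obtain ⟨a, b, hab, ha, hb, heq⟩ := hH.exists_commonNeighbors_mergeFibres_eq_insert hadj hr
    rw [heq, Set.ncard_insert_of_notMem (by simp [hab, ha]), Set.ncard_insert_of_notMem hb,
      hμ x y hadj hr]

end IsCompleteGraphCover

end CompleteGraphCover

section RegularPoint

variable {V : Type*} {G : SimpleGraph V} {v x y : V} {n k ℓ μ t q : ℕ}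

/-- The second subconstituent of `G` at `v`: the vertices distinct from `v` and not adjacent to
it. -/
def secondSubconstituent (G : SimpleGraph V) (v : V) : Set V :=
  {x | x ≠ v ∧ ¬ G.Adj v x}

/-- The span `{v, x}^⊥⊥` of two vertices, called a hyperbolic line when `G` is the collinearity
graph of a generalized quadrangle. -/
def pairSpan (G : SimpleGraph V) (v x : V) : Set V :=
  perp G (perp G {v, x})

lemma subset_perp_perp (X : Set V) : X ⊆ perp G (perp G X) :=
  fun x hx _ hw => (hw x hx).imp Eq.symm SimpleGraph.Adj.symm

lemma left_mem_pairSpan : v ∈ pairSpan G v x :=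
  subset_perp_perp _ (Set.mem_insert v {x})

lemma perp_pair_eq_commonNeighbors (hx : x ∈ secondSubconstituent G v) :
    perp G {v, x} = G.commonNeighbors v x := by
  ext w
  simp only [perp, Set.mem_ofPred_eq, Set.mem_insert_iff, Set.mem_singleton_iff,
    forall_eq_or_imp, forall_eq, SimpleGraph.mem_commonNeighbors, G.adj_comm w]
  constructor
  · rintro ⟨rfl | hvw, rfl | hxw⟩
    · exact absurd rfl hx.1
    · exact absurd hxw.symm hx.2
    · exact absurd hvw hx.2
    · exact ⟨hvw, hxw⟩
  · exact And.imp .inr .inr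

lemma inter_secondSubconstituent_eq_sdiff {X : Set V} (hx : x ∈ secondSubconstituent G v)
    (hX : X ⊆ G.neighborSet x) : X ∩ secondSubconstituent G v = X \ G.neighborSet v := by
  refine Set.ext fun y => and_congr_right fun hy => and_iff_right ?_
  rintro rfl
  exact hx.2 (hX hy).symm

lemma ncard_preimage_secondSubconstituent (X : Set V) :
    (Subtype.val ⁻¹' X : Set (secondSubconstituent G v)).ncard =
      (X ∩ secondSubconstituent G v).ncard :=
  Set.ncard_subtype (· ∈ secondSubconstituent G v) X

section Fintype

variable [Fintype V]

lemma card_secondSubconstituent (hG : G.IsSRGWith n k ℓ μ) (v : V) :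
    Nat.card (secondSubconstituent G v) = n - (k + 1) := by
  obtain ⟨hn, hk, -, -⟩ := isSRGWith_iff_ncard.1 hG
  have hcompl : secondSubconstituent G v = (insert v (G.neighborSet v))ᶜ := by
    ext y
    simp [secondSubconstituent]
  rw [Nat.card_coe_set_eq, hcompl, Set.ncard_compl, hn,
    Set.ncard_insert_of_notMem G.notMem_neighborSet_self, hk]

lemma ncard_neighborSet_induce_secondSubconstituent (hG : G.IsSRGWith n k ℓ μ)
    (x : secondSubconstituent G v) :
    ((G.induce (secondSubconstituent G v)).neighborSet x).ncard = k - μ := by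
  obtain ⟨-, hk, -, hμ⟩ := isSRGWith_iff_ncard.1 hG
  have hsplit := Set.ncard_inter_add_ncard_sdiff_eq_ncard (G.neighborSet x) (G.neighborSet v)
  rw [← G.commonNeighbors_eq, G.commonNeighbors_symm, hμ v x x.2.1.symm x.2.2, hk] at hsplit
  rw [G.neighborSet_induce, ncard_preimage_secondSubconstituent,
    inter_secondSubconstituent_eq_sdiff x.2 subset_rfl]
  omega

end Fintype

namespace IsRegularPoint

lemma not_adj_of_mem_pairSpan (hreg : IsRegularPoint G t v) (hx : x ∈ secondSubconstituent G v)
    {y z : V} (hy : y ∈ pairSpan G v x) (hz : z ∈ pairSpan G v x) : ¬ G.Adj y z :=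
  (hreg.2 x hx.1 hx.2).2 y hy z hz

lemma isCompleteBetween_pairSpan_commonNeighbors (hreg : IsRegularPoint G t v)
    (hx : x ∈ secondSubconstituent G v) :
    G.IsCompleteBetween (pairSpan G v x) (G.commonNeighbors v x) := by
  intro z hz u hu
  refine (hz u ((perp_pair_eq_commonNeighbors hx).symm ▸ hu)).resolve_left ?_
  rintro rfl
  exact hreg.not_adj_of_mem_pairSpan hx left_mem_pairSpan hz hu.1

lemma pairSpan_inter_secondSubconstituent (hreg : IsRegularPoint G t v)
    (hx : x ∈ secondSubconstituent G v) :
    pairSpan G v x ∩ secondSubconstituent G v = pairSpan G v x \ {v} :=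
  Set.ext fun _ => and_congr_right fun hy =>
    and_iff_left (hreg.not_adj_of_mem_pairSpan hx left_mem_pairSpan hy)

lemma ncard_pairSpan_inter_secondSubconstituent (hreg : IsRegularPoint G t v)
    (hx : x ∈ secondSubconstituent G v) :
    (pairSpan G v x ∩ secondSubconstituent G v).ncard = t := by
  rw [hreg.pairSpan_inter_secondSubconstituent hx,
    Set.ncard_sdiff_singleton_of_mem left_mem_pairSpan, pairSpan, (hreg.2 x hx.1 hx.2).1,
    Nat.add_sub_cancel]

variable [Fintype V]

lemma mem_pairSpan_iff (hG : G.IsSRGWith n k ℓ (t + 1)) (hreg : IsRegularPoint G t v)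
    (hx : x ∈ secondSubconstituent G v) (hy : y ∈ secondSubconstituent G v) :
    y ∈ pairSpan G v x ↔ G.commonNeighbors v x = G.commonNeighbors v y := by
  obtain ⟨-, -, -, hμ⟩ := isSRGWith_iff_ncard.1 hG
  constructor
  · intro hyspan
    have hsub : G.commonNeighbors v x ⊆ G.commonNeighbors v y := fun u hu =>
      ⟨hu.1, hreg.isCompleteBetween_pairSpan_commonNeighbors hx hyspan hu⟩
    exact Set.eq_of_subset_of_ncard_le hsub
      (by rw [hμ v x hx.1.symm hx.2, hμ v y hy.1.symm hy.2])
  · intro hxy u hu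
    rw [perp_pair_eq_commonNeighbors hx, hxy] at hu
    exact .inr hu.2

lemma isIndepSet_commonNeighbors (hG : G.IsSRGWith n k ℓ (t + 1)) (hℓ : ℓ < t + 1)
    (hreg : IsRegularPoint G t v) (hx : x ∈ secondSubconstituent G v) :
    G.IsIndepSet (G.commonNeighbors v x) := by
  intro y hy z hz _ hyz
  obtain ⟨-, -, hadj, -⟩ := isSRGWith_iff_ncard.1 hG
  have hjoin := hreg.isCompleteBetween_pairSpan_commonNeighbors hx
  have hsub : pairSpan G v x ⊆ G.commonNeighbors y z := fun w hw =>
    ⟨(hjoin hw hy).symm, (hjoin hw hz).symm⟩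
  have hle := Set.ncard_le_ncard hsub
  rw [hadj y z hyz, pairSpan, (hreg.2 x hx.1 hx.2).1] at hle
  omega

end IsRegularPoint

/-- The equivalence relation on the second subconstituent at `v` whose classes are the cocliques
of the spread: two vertices are related if they have the same common neighbours with `v`. -/
def spreadSetoid (G : SimpleGraph V) (v : V) : Setoid (secondSubconstituent G v) :=
  Setoid.ker fun x => G.commonNeighbors v x

namespace IsRegularPoint

lemma ncard_spreadSetoid_class [Fintype V] (hG : G.IsSRGWith n k ℓ (t + 1))
    (hreg : IsRegularPoint G t v) (x : secondSubconstituent G v) :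
    {y | spreadSetoid G v x y}.ncard = t := by
  have hclass : {y | spreadSetoid G v x y} = Subtype.val ⁻¹' pairSpan G v x :=
    Set.ext fun y => (hreg.mem_pairSpan_iff hG x.2 y.2).symm
  rw [hclass, ncard_preimage_secondSubconstituent,
    hreg.ncard_pairSpan_inter_secondSubconstituent x.2]

variable [Fintype V]
  (hG : G.IsSRGWith (q ^ 3 + q ^ 2 + q + 1) (q ^ 2 + q) (q - 1) (q + 1))
include hG

lemma ncard_neighborSet_inter_pairSpan (hreg : IsRegularPoint G q v)
    (hx : x ∈ secondSubconstituent G v) (hy : y ∈ secondSubconstituent G v)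
    (hyspan : y ∉ pairSpan G v x) : (G.neighborSet y ∩ pairSpan G v x).ncard = 1 := by
  obtain ⟨-, -, -, hμ⟩ := isSRGWith_iff_ncard.1 hG
  exact ncard_neighborSet_inter_eq_one_of_isCompleteBetween hG (hreg.2 x hx.1 hx.2).1
    (hμ v x hx.1.symm hx.2) (fun _ ha _ hb _ => hreg.not_adj_of_mem_pairSpan hx ha hb)
    (hreg.isCompleteBetween_pairSpan_commonNeighbors hx) hyspan fun h => hy.2 h.1

lemma ncard_neighborSet_inter_commonNeighbors (hreg : IsRegularPoint G q v)
    (hx : x ∈ secondSubconstituent G v) (hy : y ∈ secondSubconstituent G v)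
    (hyspan : y ∉ pairSpan G v x) : (G.neighborSet y ∩ G.commonNeighbors v x).ncard = 1 := by
  obtain ⟨-, -, -, hμ⟩ := isSRGWith_iff_ncard.1 hG
  exact ncard_neighborSet_inter_eq_one_of_isCompleteBetween hG (hμ v x hx.1.symm hx.2)
    (hreg.2 x hx.1 hx.2).1 (hreg.isIndepSet_commonNeighbors hG (by omega) hx)
    (hreg.isCompleteBetween_pairSpan_commonNeighbors hx).symm (fun h => hy.2 h.1) hyspan

theorem isCompleteGraphCover_induce (hreg : IsRegularPoint G q v) :
    IsCompleteGraphCover (G.induce (secondSubconstituent G v)) (spreadSetoid G v) where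
  not_adj x y hxy := hreg.not_adj_of_mem_pairSpan x.2
    ((hreg.mem_pairSpan_iff hG x.2 x.2).2 rfl) ((hreg.mem_pairSpan_iff hG x.2 y.2).2 hxy)
  existsUnique_adj x y hxy := by
    have hxspan : ↑x ∉ pairSpan G v y := fun h =>
      hxy ((hreg.mem_pairSpan_iff hG y.2 x.2).1 h).symm
    obtain ⟨z, ⟨hxz, hzspan⟩, hz⟩ := Set.singleton_iff_unique_mem.1 <| Set.ncard_eq_one.1 <|
      hreg.ncard_neighborSet_inter_pairSpan hG y.2 x.2 hxspan
    have hzmem : z ∈ secondSubconstituent G v :=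
      ⟨fun h => x.2.2 (h ▸ hxz).symm,
        hreg.not_adj_of_mem_pairSpan y.2 left_mem_pairSpan hzspan⟩
    exact ⟨⟨z, hzmem⟩, ⟨hxz, (hreg.mem_pairSpan_iff hG y.2 hzmem).1 hzspan⟩, fun w hw =>
      Subtype.ext (hz w ⟨hw.1, (hreg.mem_pairSpan_iff hG y.2 w.2).2 hw.2⟩)⟩

lemma ncard_commonNeighbors_induce (hreg : IsRegularPoint G q v)
    {x y : secondSubconstituent G v} (hxy : ¬ spreadSetoid G v x y) :
    ((G.induce (secondSubconstituent G v)).commonNeighbors x y).ncard =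
      (G.commonNeighbors (x : V) y).ncard - 1 := by
  have hyspan : ↑y ∉ pairSpan G v x := fun h => hxy ((hreg.mem_pairSpan_iff hG x.2 y.2).1 h)
  have hnear : G.commonNeighbors (x : V) y ∩ G.neighborSet v =
      G.neighborSet y ∩ G.commonNeighbors v x := by
    rw [G.commonNeighbors_eq, G.commonNeighbors_eq, Set.inter_comm,
      Set.inter_comm (G.neighborSet y), Set.inter_assoc]
  have hsplit := Set.ncard_inter_add_ncard_sdiff_eq_ncard (G.commonNeighbors (x : V) y)
    (G.neighborSet v)
  rw [hnear, hreg.ncard_neighborSet_inter_commonNeighbors hG x.2 y.2 hyspan] at hsplit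
  calc ((G.induce (secondSubconstituent G v)).commonNeighbors x y).ncard
      = (G.commonNeighbors (x : V) y ∩ secondSubconstituent G v).ncard :=
        ncard_preimage_secondSubconstituent (G.commonNeighbors (x : V) y)
    _ = (G.commonNeighbors (x : V) y \ G.neighborSet v).ncard := by
        rw [inter_secondSubconstituent_eq_sdiff x.2 (G.commonNeighbors_subset_neighborSet_left x y)]
    _ = (G.commonNeighbors (x : V) y).ncard - 1 := by omega

end IsRegularPoint

end RegularPoint

/-- Let `q ≥ 2`, `Γ` strongly regular with parameters
`(q³+q²+q+1, q²+q, q−1, q+1)`, and `v` a regular point (with `s = t = q`). The graph `Γ'`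
on the `q³` vertices distinct from `v` and not adjacent to `v`, in which distinct `x, y`
are adjacent iff they are adjacent in `Γ` or `N(v) ∩ N(x) = N(v) ∩ N(y)`, is strongly
regular with parameters `(q³, (q−1)(q+2), q−2, q+2)`, i.e. with the parameters of the
collinearity graph of a generalized quadrangle of order `(q−1, q+1)`. -/
theorem secondSubconstituent_with_spread_isSRGWith {V : Type} [Fintype V]
    (q : ℕ) (hq : 2 ≤ q) (G : SimpleGraph V)
    (hG : G.IsSRGWith (q ^ 3 + q ^ 2 + q + 1) (q ^ 2 + q) (q - 1) (q + 1))
    (v : V) (hreg : IsRegularPoint G q v) :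
    (SimpleGraph.fromRel
      (fun x y : {x : V | x ≠ v ∧ ¬ G.Adj v x} =>
        G.Adj ↑x ↑y ∨
          G.neighborSet v ∩ G.neighborSet ↑x =
            G.neighborSet v ∩ G.neighborSet ↑y)).IsSRGWith
      (q ^ 3) ((q - 1) * (q + 2)) (q - 2) (q + 2) := by
  obtain ⟨-, -, hadj, hnadj⟩ := isSRGWith_iff_ncard.1 hG
  have hcover := hreg.isCompleteGraphCover_induce hG
  have hdegree : (q - 1) * (q + 2) = q ^ 2 + q - (q + 1) + (q - 1) := by
    obtain ⟨m, rfl⟩ := Nat.exists_eq_add_of_le' (one_le_two.trans hq)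
    simp only [Nat.add_sub_cancel]
    ring_nf
    omega
  rw [hdegree]
  refine hcover.isSRGWith_mergeFibres ?_ (ncard_neighborSet_induce_secondSubconstituent hG)
    (hreg.ncard_spreadSetoid_class hG) (fun x y hxy => ?_) fun x y hxy hr => ?_
  · refine (card_secondSubconstituent hG v).trans ?_
    omega
  · rw [hreg.ncard_commonNeighbors_induce hG fun hr => hcover.not_adj hr hxy, hadj x y hxy,
      Nat.sub_sub]
  · have hne : (x : V) ≠ y := fun h => hr (Subtype.ext h ▸ (spreadSetoid G v).refl x)
    rw [hreg.ncard_commonNeighbors_induce hG hr, hnadj x y hne hxy, Nat.add_sub_cancel]
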